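/- The pair (θ, w) is a classical solution of the clamped Reissner–Mindlin plate system with unit load on the open unit disk Ω = {(x,y) : x² + y² < 1}: for every (x,y) ∈ Ω one has −∇·(C ε(θ))(x,y) − λ t⁻² (∇w(x,y) − θ(x,y)) = 0 and −λ t⁻² ∇·(∇w − θ)(x,y) = 1, and moreover θ(x,y) = (0,0) and w(x,y) = 0 for every (x,y) with x² + y² = 1. -/

import Mathlib

/-!
The shear strain is linear: `∇w - θ = -(t² / (2λ)) (x, y)` (`pdx_w`, `pdy_w`), so the scaled shear
`λ t⁻² (∇w - θ)` is `-(x, y) / 2`, whose divergence is `-1`; this is the second equation.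
The strain of `θ` is quadratic, and the divergence of `C ε(θ)` is `(x, y) / 2` (`divCeps₁_θ`,
`divCeps₂_θ`), which balances the scaled shear in the first equation. The bending modulus `Dc`
cancels against the factor `1 / (16 Dc)` in `θ`, and Poisson's ratio drops out because the two
contributions `(3 + ν) / 8` and `(1 - ν) / 8` add up to `1 / 2`. On the unit circle the factor
`x² + y² - 1` kills `θ`, and `w` reduces to `1 / (64 Dc) - 1 / (64 Dc)`.

All functions involved are polynomials, so every partial derivative below is a genuine one.
-/

noncomputable section

open Set

/-- Partial derivative in the first variable. -/
def pdx (f : ℝ → ℝ → ℝ) (x y : ℝ) : ℝ := deriv (fun s => f s y) x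

/-- Partial derivative in the second variable. -/
def pdy (f : ℝ → ℝ → ℝ) (x y : ℝ) : ℝ := deriv (fun s => f x s) y

/-- Young's modulus. -/
def E : ℝ := 1.092

/-- Poisson's ratio. -/
def ν : ℝ := 0.3

/-- D = E / (12 (1 - ν²)). -/
def Dc : ℝ := E / (12 * (1 - ν ^ 2))

/-- Shear correction factor λ = 5E / (12 (1 + ν)). -/
def lam : ℝ := 5 * E / (12 * (1 + ν))

/-- First component of the rotation field θ. -/
def θ₁ (x y : ℝ) : ℝ := (1 / (16 * Dc)) * (x * (x ^ 2 + y ^ 2 - 1))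

/-- Second component of the rotation field θ. -/
def θ₂ (x y : ℝ) : ℝ := (1 / (16 * Dc)) * (y * (x ^ 2 + y ^ 2 - 1))

/-- Transverse displacement w (depending on the thickness t). -/
def w (t x y : ℝ) : ℝ :=
  (x ^ 2 + y ^ 2) ^ 2 / (64 * Dc)
    - (x ^ 2 + y ^ 2 - 1) * (t ^ 2 / (4 * lam) + 1 / (32 * Dc))
    - 1 / (64 * Dc)

/-- First component of the row-wise divergence of C ε(θ), where
    (C τ) = D ((1-ν) τ + ν tr(τ) I₂) and ε(θ) = (∇θ + ∇θᵀ)/2. -/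
def divCeps₁ (f₁ f₂ : ℝ → ℝ → ℝ) (x y : ℝ) : ℝ :=
  pdx (fun a b => Dc * ((1 - ν) * pdx f₁ a b + ν * (pdx f₁ a b + pdy f₂ a b))) x y
    + pdy (fun a b => Dc * ((1 - ν) * ((pdy f₁ a b + pdx f₂ a b) / 2))) x y

/-- Second component of the row-wise divergence of C ε(θ). -/
def divCeps₂ (f₁ f₂ : ℝ → ℝ → ℝ) (x y : ℝ) : ℝ :=
  pdx (fun a b => Dc * ((1 - ν) * ((pdy f₁ a b + pdx f₂ a b) / 2))) x y
    + pdy (fun a b => Dc * ((1 - ν) * pdy f₂ a b + ν * (pdx f₁ a b + pdy f₂ a b))) x y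

/-- Divergence of the shear vector ∇w - θ. -/
def divShear (W f₁ f₂ : ℝ → ℝ → ℝ) (x y : ℝ) : ℝ :=
  pdx (fun a b => pdx W a b - f₁ a b) x y + pdy (fun a b => pdy W a b - f₂ a b) x y

/-- Every function of one variable differentiated below is a polynomial of degree at most four. -/
lemma deriv_of_eq_quartic {f : ℝ → ℝ} (a b c d e : ℝ)
    (h : ∀ s, f s = a * s ^ 4 + b * s ^ 3 + c * s ^ 2 + d * s + e) (x : ℝ) :
    deriv f x = 4 * a * x ^ 3 + 3 * b * x ^ 2 + 2 * c * x + d := by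
  rw [funext h]
  have := (((((hasDerivAt_pow 4 x).const_mul a).add ((hasDerivAt_pow 3 x).const_mul b)).add
    ((hasDerivAt_pow 2 x).const_mul c)).add ((hasDerivAt_id x).const_mul d)).add
    (hasDerivAt_const x e)
  refine HasDerivAt.deriv (this.congr_deriv ?_)
  push_cast
  ring

lemma pdx_θ₁ (x y : ℝ) : pdx θ₁ x y = 1 / (16 * Dc) * (3 * x ^ 2 + y ^ 2 - 1) := by
  refine (deriv_of_eq_quartic 0 (1 / (16 * Dc)) 0 (1 / (16 * Dc) * (y ^ 2 - 1)) 0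
    (fun s => ?_) x).trans ?_
  · simp only [θ₁]; ring
  · ring

lemma pdy_θ₁ (x y : ℝ) : pdy θ₁ x y = 1 / (16 * Dc) * (2 * x * y) := by
  refine (deriv_of_eq_quartic 0 0 (1 / (16 * Dc) * x) 0 (1 / (16 * Dc) * (x * (x ^ 2 - 1)))
    (fun s => ?_) y).trans ?_
  · simp only [θ₁]; ring
  · ring

lemma pdx_θ₂ (x y : ℝ) : pdx θ₂ x y = 1 / (16 * Dc) * (2 * x * y) := by
  refine (deriv_of_eq_quartic 0 0 (1 / (16 * Dc) * y) 0 (1 / (16 * Dc) * (y * (y ^ 2 - 1)))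
    (fun s => ?_) x).trans ?_
  · simp only [θ₂]; ring
  · ring

lemma pdy_θ₂ (x y : ℝ) : pdy θ₂ x y = 1 / (16 * Dc) * (x ^ 2 + 3 * y ^ 2 - 1) := by
  refine (deriv_of_eq_quartic 0 (1 / (16 * Dc)) 0 (1 / (16 * Dc) * (x ^ 2 - 1)) 0
    (fun s => ?_) y).trans ?_
  · simp only [θ₂]; ring
  · ring

lemma w_symm (t x y : ℝ) : w t x y = w t y x := by
  simp only [w]; ring

lemma pdx_w (t x y : ℝ) : pdx (w t) x y = θ₁ x y - t ^ 2 / (2 * lam) * x := by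
  refine (deriv_of_eq_quartic (1 / (64 * Dc)) 0
    (y ^ 2 / (32 * Dc) - (t ^ 2 / (4 * lam) + 1 / (32 * Dc))) 0 (w t 0 y)
    (fun s => ?_) x).trans ?_
  · simp only [w]; ring
  · simp only [θ₁]; ring

lemma pdy_w (t x y : ℝ) : pdy (w t) x y = θ₂ x y - t ^ 2 / (2 * lam) * y := by
  have h : pdy (w t) x y = pdx (w t) y x := by
    simp only [pdx, pdy, w_symm t x]
  rw [h, pdx_w]
  simp only [θ₁, θ₂]; ring

lemma Dc_ne_zero : Dc ≠ 0 := by norm_num [Dc, E, ν]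

lemma lam_ne_zero : lam ≠ 0 := by norm_num [lam, E, ν]

lemma divCeps₁_θ (x y : ℝ) : divCeps₁ θ₁ θ₂ x y = x / 2 := by
  have hD := Dc_ne_zero
  simp only [divCeps₁, pdx_θ₁, pdy_θ₁, pdx_θ₂, pdy_θ₂]
  have h₁ : pdx (fun a b => Dc * ((1 - ν) * (1 / (16 * Dc) * (3 * a ^ 2 + b ^ 2 - 1))
      + ν * (1 / (16 * Dc) * (3 * a ^ 2 + b ^ 2 - 1)
        + 1 / (16 * Dc) * (a ^ 2 + 3 * b ^ 2 - 1)))) x y = (3 + ν) / 8 * x := by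
    refine (deriv_of_eq_quartic 0 0 ((3 + ν) / 16) 0
      (((1 + 3 * ν) * y ^ 2 - 1 - ν) / 16) (fun s => ?_) x).trans ?_
    · field_simp; ring
    · ring
  have h₂ : pdy (fun a b => Dc * ((1 - ν) * ((1 / (16 * Dc) * (2 * a * b)
      + 1 / (16 * Dc) * (2 * a * b)) / 2))) x y = (1 - ν) / 8 * x := by
    refine (deriv_of_eq_quartic 0 0 0 ((1 - ν) / 8 * x) 0 (fun s => ?_) y).trans ?_
    · field_simp; ring
    · ring
  rw [h₁, h₂]; ring

lemma divCeps₂_θ (x y : ℝ) : divCeps₂ θ₁ θ₂ x y = y / 2 := by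
  have hD := Dc_ne_zero
  simp only [divCeps₂, pdx_θ₁, pdy_θ₁, pdx_θ₂, pdy_θ₂]
  have h₁ : pdx (fun a b => Dc * ((1 - ν) * ((1 / (16 * Dc) * (2 * a * b)
      + 1 / (16 * Dc) * (2 * a * b)) / 2))) x y = (1 - ν) / 8 * y := by
    refine (deriv_of_eq_quartic 0 0 0 ((1 - ν) / 8 * y) 0 (fun s => ?_) x).trans ?_
    · field_simp; ring
    · ring
  have h₂ : pdy (fun a b => Dc * ((1 - ν) * (1 / (16 * Dc) * (a ^ 2 + 3 * b ^ 2 - 1))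
      + ν * (1 / (16 * Dc) * (3 * a ^ 2 + b ^ 2 - 1)
        + 1 / (16 * Dc) * (a ^ 2 + 3 * b ^ 2 - 1)))) x y = (3 + ν) / 8 * y := by
    refine (deriv_of_eq_quartic 0 0 ((3 + ν) / 16) 0
      (((1 + 3 * ν) * x ^ 2 - 1 - ν) / 16) (fun s => ?_) y).trans ?_
    · field_simp; ring
    · ring
  rw [h₁, h₂]; ring

lemma divShear_w (t x y : ℝ) : divShear (w t) θ₁ θ₂ x y = -(t ^ 2 / lam) := by
  simp only [divShear, pdx_w, pdy_w]
  have h₁ : pdx (fun a b => θ₁ a b - t ^ 2 / (2 * lam) * a - θ₁ a b) x y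
      = -(t ^ 2 / (2 * lam)) := by
    refine (deriv_of_eq_quartic 0 0 0 (-(t ^ 2 / (2 * lam))) 0 (fun s => ?_) x).trans ?_ <;> ring
  have h₂ : pdy (fun a b => θ₂ a b - t ^ 2 / (2 * lam) * b - θ₂ a b) x y
      = -(t ^ 2 / (2 * lam)) := by
    refine (deriv_of_eq_quartic 0 0 0 (-(t ^ 2 / (2 * lam))) 0 (fun s => ?_) y).trans ?_ <;> ring
  rw [h₁, h₂]; ring

/-- (θ, w) is a classical solution of the clamped Reissner–Mindlin
plate system with unit load on the open unit disk: both PDEs hold at every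
point with x² + y² < 1, and θ and w vanish on the unit circle. -/
theorem reissner_mindlin_disk_solution (t : ℝ) (ht : 0 < t) :
    (∀ x y : ℝ, x ^ 2 + y ^ 2 < 1 →
      -(divCeps₁ θ₁ θ₂ x y) - lam * t⁻¹ ^ 2 * (pdx (w t) x y - θ₁ x y) = 0 ∧
      -(divCeps₂ θ₁ θ₂ x y) - lam * t⁻¹ ^ 2 * (pdy (w t) x y - θ₂ x y) = 0 ∧
      -(lam * t⁻¹ ^ 2) * divShear (w t) θ₁ θ₂ x y = 1) ∧
    (∀ x y : ℝ, x ^ 2 + y ^ 2 = 1 →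
      θ₁ x y = 0 ∧ θ₂ x y = 0 ∧ w t x y = 0) := by
  have hl := lam_ne_zero
  have ht' := ht.ne'
  refine ⟨fun x y _ => ⟨?_, ?_, ?_⟩, fun x y h => ⟨?_, ?_, ?_⟩⟩
  · rw [divCeps₁_θ, pdx_w]; field_simp; ring
  · rw [divCeps₂_θ, pdy_w]; field_simp; ring
  · rw [divShear_w]; field_simp
  · simp [θ₁, h]
  · simp [θ₂, h]
  · simp [w, h]
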